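/- arXiv:1208.2084 — 3 statements merged into one kernel-verified Lean document; each statement's English description precedes it below -/
import Mathlib

section
/- Let G be a group, P and P' subgroups of G, U' and Q subgroups of P', and g ∈ G. Then the map sending the double coset (g⁻¹Pg ∩ P') a Q to the double coset P(ga)Q, for a ∈ U'Q, is a well-defined bijection from the set of (g⁻¹Pg ∩ P', Q)-double cosets contained in (g⁻¹Pg ∩ P') U' Q onto the set of (P, Q)-double cosets contained in P g U' Q. -/
/-!
Replacing `P` by `H = g⁻¹Pg` reduces everything to left translation by `g` and the case `g = 1`.
For `a ∈ P'` and `Q ≤ P'`, Dedekind's modular law gives `HaQ ∩ P' = (H ∩ P')aQ`, so intersecting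
with `P'` undoes the map `(H ∩ P')aQ ↦ H(H ∩ P')aQ = HaQ`.
-/

open Pointwise
open DoubleCoset (doubleCoset doubleCoset_eq_of_mem mem_doubleCoset)

/-- The set `H\S/K = {HaK | a ∈ S}` of double cosets represented in `S`. For subgroups
`H`, `K` and `S = HTK`, these are the double cosets contained in `S`. -/
def doubleCosets {G : Type*} [Mul G] (H K S : Set G) : Set (Set G) :=
  {d | ∃ a ∈ S, d = doubleCoset a H K}

section Group

variable {G : Type*} [Group G]

/-- The conjugate subgroup `g⁻¹Pg`, encoded as the preimage of `P` under `x ↦ gxg⁻¹`. -/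
def rightConj (P : Subgroup G) (g : G) : Subgroup G :=
  P.comap (MulAut.conj g).toMonoidHom

theorem mem_rightConj {P : Subgroup G} {g x : G} : x ∈ rightConj P g ↔ g * x * g⁻¹ ∈ P :=
  Iff.rfl

theorem singleton_mul_rightConj (P : Subgroup G) (g : G) :
    {g} * (rightConj P g : Set G) = (P : Set G) * {g} := by
  ext x
  simp [mem_rightConj]

theorem singleton_mul_doubleCoset_rightConj (P : Subgroup G) (K : Set G) (g a : G) :
    {g} * doubleCoset a (rightConj P g) K = doubleCoset (g * a) P K := by
  simp only [doubleCoset, ← mul_assoc, singleton_mul_rightConj, ← Set.singleton_mul_singleton]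

theorem coe_mul_coe_of_le {H L : Subgroup G} (h : L ≤ H) : (H * L : Set G) = H :=
  (Set.mul_subset_mul_left h).trans_eq (coe_mul_coe H) |>.antisymm
    (Set.subset_mul_left _ L.one_mem)

theorem mul_doubleCoset_of_le {H L : Subgroup G} (h : L ≤ H) (K : Set G) (a : G) :
    H * doubleCoset a L K = doubleCoset a H K := by
  simp only [doubleCoset, ← mul_assoc, coe_mul_coe_of_le h]

theorem doubleCoset_inf {L K : Subgroup G} (H : Subgroup G) (hK : K ≤ L) {a : G} (ha : a ∈ L) :
    doubleCoset a (H ⊓ L : Subgroup G) K = doubleCoset a H K ∩ L := by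
  ext x
  simp only [Set.mem_inter_iff, mem_doubleCoset, SetLike.mem_coe, Subgroup.mem_inf]
  constructor
  · rintro ⟨h, ⟨hH, hL⟩, k, hk, rfl⟩
    exact ⟨⟨h, hH, k, hk, rfl⟩, mul_mem (mul_mem hL ha) (hK hk)⟩
  · rintro ⟨⟨h, hH, k, hk, rfl⟩, hx⟩
    have hL : h ∈ L := by
      rwa [L.mul_mem_cancel_right (hK hk), L.mul_mem_cancel_right ha] at hx
    exact ⟨h, ⟨hH, hL⟩, k, hk, rfl⟩

theorem doubleCosets_mul_mul (H K : Subgroup G) (S : Set G) :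
    doubleCosets (H : Set G) K (H * S * K) = doubleCosets (H : Set G) K S := by
  ext d
  constructor
  · rintro ⟨_, ⟨_, ⟨h, hh, s, hs, rfl⟩, k, hk, rfl⟩, rfl⟩
    exact ⟨s, hs, doubleCoset_eq_of_mem (mem_doubleCoset.2 ⟨h, hh, k, hk, rfl⟩)⟩
  · rintro ⟨s, hs, rfl⟩
    have hmem : s ∈ (H * S * K : Set G) :=
      Set.subset_mul_left _ K.one_mem (Set.subset_mul_right _ H.one_mem hs)
    exact ⟨s, hmem, rfl⟩

theorem mul_singleton_mul_doubleCoset_rightConj_inf (P L : Subgroup G) (K : Set G) (g a : G) :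
    P * {g} * doubleCoset a (rightConj P g ⊓ L : Subgroup G) K = doubleCoset (g * a) P K := by
  rw [← singleton_mul_rightConj, mul_assoc, mul_doubleCoset_of_le inf_le_left,
    singleton_mul_doubleCoset_rightConj]

theorem singleton_inv_mul_doubleCoset_inter (P : Subgroup G) {L K : Subgroup G} (hK : K ≤ L) (g : G)
    {a : G} (ha : a ∈ L) :
    {g⁻¹} * doubleCoset (g * a) P K ∩ L = doubleCoset a (rightConj P g ⊓ L : Subgroup G) K := by
  rw [doubleCoset_inf _ hK ha, ← singleton_mul_doubleCoset_rightConj, ← mul_assoc,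
    Set.singleton_mul_singleton, inv_mul_cancel, Set.singleton_one, one_mul]

theorem image_mul_singleton_mul_doubleCosets (P L : Subgroup G) (K S : Set G) (g : G) :
    ((P : Set G) * {g} * ·) '' doubleCosets (rightConj P g ⊓ L : Subgroup G) K S =
      doubleCosets P K ({g} * S) := by
  ext d
  constructor
  · rintro ⟨_, ⟨a, ha, rfl⟩, rfl⟩
    exact ⟨g * a, Set.mul_mem_mul rfl ha, mul_singleton_mul_doubleCoset_rightConj_inf P L K g a⟩
  · rintro ⟨_, ⟨x, hx, a, ha, rfl⟩, rfl⟩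
    obtain rfl : x = g := hx
    exact ⟨_, ⟨a, ha, rfl⟩, mul_singleton_mul_doubleCoset_rightConj_inf P L K x a⟩

theorem injOn_mul_singleton_mul_doubleCosets (P : Subgroup G) {L K : Subgroup G} (hK : K ≤ L)
    {S : Set G} (hS : S ⊆ L) (g : G) :
    Set.InjOn ((P : Set G) * {g} * ·)
      (doubleCosets (rightConj P g ⊓ L : Subgroup G) K S) := by
  apply Set.LeftInvOn.injOn (f₁' := fun d ↦ {g⁻¹} * d ∩ (L : Set G))
  rintro _ ⟨a, ha, rfl⟩
  simp only [mul_singleton_mul_doubleCoset_rightConj_inf,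
    singleton_inv_mul_doubleCoset_inter P hK g (hS ha)]

theorem bijOn_mul_singleton_mul_doubleCosets (P : Subgroup G) {L K : Subgroup G} (hK : K ≤ L)
    {S : Set G} (hS : S ⊆ L) (g : G) :
    Set.BijOn ((P : Set G) * {g} * ·)
      (doubleCosets (rightConj P g ⊓ L : Subgroup G) K S) (doubleCosets P K ({g} * S)) :=
  image_mul_singleton_mul_doubleCosets P L K S g ▸
    (injOn_mul_singleton_mul_doubleCosets P hK hS g).bijOn_image

theorem double_cosets_in_PgUQ_equiv_general (P : Subgroup G) {P' Q : Subgroup G} {S : Set G}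
    (hS : S ⊆ P') (hQ : Q ≤ P') (g : G) :
    let R : Subgroup G := rightConj P g ⊓ P'
    ∃ e : doubleCosets (R : Set G) Q (R * S * Q) ≃ doubleCosets (P : Set G) Q (P * {g} * S * Q),
      ∀ a (ha : a ∈ (R * S * Q : Set G)),
        (e ⟨doubleCoset a R Q, a, ha, rfl⟩ : Set G) = doubleCoset (g * a) P Q := by
  intro R
  have hbij : Set.BijOn ((P : Set G) * {g} * ·) (doubleCosets (R : Set G) Q (R * S * Q))
      (doubleCosets (P : Set G) Q (P * {g} * S * Q)) := by
    rw [mul_assoc (P : Set G), doubleCosets_mul_mul, doubleCosets_mul_mul]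
    exact bijOn_mul_singleton_mul_doubleCosets P hQ hS g
  exact ⟨hbij.equiv _, fun a _ ↦ mul_singleton_mul_doubleCoset_rightConj_inf P P' Q g a⟩

end Group

/-- Let `G` be a group, `P, P'` subgroups, `U', Q` subgroups of `P'`,
and `g ∈ G`.  Writing `g⁻¹Pg = {x | g x g⁻¹ ∈ P}` and `R = g⁻¹Pg ∩ P'`, the map sending
the double coset `R a Q` to `P (ga) Q` (for `a ∈ U'Q`) is a well-defined bijection from
the set of `(R, Q)`-double cosets contained in `R U' Q` onto the set of `(P, Q)`-double
cosets contained in `P g U' Q`. -/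
theorem double_cosets_in_PgUQ_equiv {G : Type*} [Group G]
    (P P' U' Q : Subgroup G) (hU' : U' ≤ P') (hQ : Q ≤ P') (g : G) :
    ∃ e : {d : Set G | ∃ a ∈ (({x : G | g * x * g⁻¹ ∈ P} ∩ ↑P') * (↑U' : Set G) * (↑Q : Set G)),
            d = ({x : G | g * x * g⁻¹ ∈ P} ∩ ↑P') * {a} * ↑Q} ≃
          {d : Set G | ∃ x ∈ ((↑P : Set G) * {g} * (↑U' : Set G) * (↑Q : Set G)),
            d = (↑P : Set G) * {x} * ↑Q},
      ∀ a (ha : a ∈ ((↑U' : Set G) * (↑Q : Set G)))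
        (ha' : a ∈ (({x : G | g * x * g⁻¹ ∈ P} ∩ ↑P') * (↑U' : Set G) * (↑Q : Set G))),
        (e ⟨({x : G | g * x * g⁻¹ ∈ P} ∩ ↑P') * {a} * ↑Q, ⟨a, ha', rfl⟩⟩ : Set G)
          = (↑P : Set G) * {g * a} * ↑Q := by
  obtain ⟨e, he⟩ := double_cosets_in_PgUQ_equiv_general P hU' hQ g
  exact ⟨e, fun a _ ha' ↦ he a ha'⟩
end

section
/- Let G be a group that is the internal semidirect product of a subgroup L and a normal subgroup U (so U is normal in G, L ∩ U = {1}, and LU = G). Let R be a subgroup of G satisfying R = (R ∩ L)(R ∩ U), and let L₃ be a subgroup of L. Then the map sending the double coset (R ∩ L) l L₃ to the double coset R l (L₃U), for l ∈ L, is a well-defined bijection from (R ∩ L)\L/L₃ onto R\G/(L₃U). -/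
open Pointwise

/-!
Since `U` is normal it commutes with every subset of `G`, so it absorbs the `U`-parts of both
`R = (R ∩ L)(R ∩ U)` and `x = l v`, leaving `R x (L₃ U) = (R ∩ L) l L₃ U`. The map on double cosets
is thus `S ↦ S U`, and since `L ∩ U = 1` a subset `S` of `L` is recovered from `S U` as `S U ∩ L`.
-/

section

variable {G : Type*} [Group G] {L U : Subgroup G} {A B C : Set G}

theorem mul_subgroup_inter_eq_of_subset (hLU : Disjoint L U) {S : Set G} (hS : S ⊆ L) :
    S * (U : Set G) ∩ L = S := by
  refine Set.Subset.antisymm ?_ fun s hs ↦ ⟨⟨s, hs, 1, U.one_mem, mul_one s⟩, hS hs⟩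
  rintro _ ⟨⟨s, hs, u, hu, rfl⟩, hsu⟩
  have hu_one : u = 1 :=
    Subgroup.disjoint_def.1 hLU ((L.mul_mem_cancel_left (hS hs)).1 hsu) hu
  simpa [hu_one] using hs

theorem injOn_powerset_mul_subgroup (hLU : Disjoint L U) :
    Set.InjOn (· * (U : Set G)) (𝒫 (L : Set G)) :=
  Set.LeftInvOn.injOn (f₁' := (· ∩ (L : Set G))) fun _ hS ↦ mul_subgroup_inter_eq_of_subset hLU hS

theorem mul_subgroup_eq_of_subset (hB : B ⊆ U) (hBne : B.Nonempty) : B * (U : Set G) = U := by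
  obtain ⟨b, hb⟩ := hBne
  refine Set.Subset.antisymm ((Set.mul_subset_mul_right hB).trans_eq (coe_mul_coe U)) ?_
  calc (U : Set G) = {b} * U := (Subgroup.singleton_mul_subgroup (hB hb)).symm
    _ ⊆ B * U := Set.mul_subset_mul_right (Set.singleton_subset_iff.2 hb)

theorem mul_mul_normal_eq_of_subset [U.Normal] (hB : B ⊆ U) (hBne : B.Nonempty) (S : Set G) :
    B * (S * (U : Set G)) = S * U := by
  rw [Subgroup.set_mul_normal_comm, ← mul_assoc, mul_subgroup_eq_of_subset hB hBne]

theorem mul_mul_singleton_mul_mul_normal [U.Normal] (hB : B ⊆ U) (hBne : B.Nonempty)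
    (A C : Set G) (l : G) {v : G} (hv : v ∈ U) :
    A * B * {l * v} * (C * (U : Set G)) = A * {l} * C * U := by
  have hvU : {v} ⊆ (U : Set G) := Set.singleton_subset_iff.2 hv
  calc A * B * {l * v} * (C * (U : Set G))
      = A * (B * ({l} * ({v} * (C * U)))) := by
        simp only [← Set.singleton_mul_singleton, mul_assoc]
    _ = A * (B * ({l} * C * U)) := by
        rw [mul_mul_normal_eq_of_subset hvU (Set.singleton_nonempty v), ← mul_assoc {l} C]
    _ = A * {l} * C * U := by
        rw [mul_mul_normal_eq_of_subset hB hBne]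
        simp only [mul_assoc]

theorem mul_mul_singleton_mul_normal [U.Normal] (hB : B ⊆ U) (hBne : B.Nonempty)
    (A C : Set G) (l : G) :
    A * B * {l} * (C * (U : Set G)) = A * {l} * C * U := by
  simpa only [mul_one] using mul_mul_singleton_mul_mul_normal hB hBne A C l U.one_mem

theorem mul_singleton_mul_subset (hA : A ⊆ L) (hC : C ⊆ L) {l : G} (hl : l ∈ L) :
    A * {l} * C ⊆ L := by
  rintro _ ⟨_, ⟨a, ha, _, rfl, rfl⟩, c, hc, rfl⟩
  exact L.mul_mem (L.mul_mem (hA ha) hl) (hC hc)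

theorem bijOn_mul_normal_of_isComplement' [U.Normal] (hLU : L.IsComplement' U)
    (hA : A ⊆ L) (hB : B ⊆ U) (hBne : B.Nonempty) (hC : C ⊆ L) :
    Set.BijOn (· * (U : Set G)) {d | ∃ l ∈ L, d = A * {l} * C}
      {d | ∃ x : G, d = A * B * {x} * (C * (U : Set G))} := by
  refine ⟨?mapsTo, (injOn_powerset_mul_subgroup hLU.disjoint).mono ?subset, ?surjOn⟩
  case mapsTo =>
    rintro _ ⟨l, -, rfl⟩
    exact ⟨l, (mul_mul_singleton_mul_normal hB hBne A C l).symm⟩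
  case subset =>
    rintro _ ⟨l, hl, rfl⟩
    exact mul_singleton_mul_subset hA hC hl
  case surjOn =>
    rintro _ ⟨x, rfl⟩
    obtain ⟨l, hl, v, hv, rfl⟩ : x ∈ (L : Set G) * U := hLU.mul_eq ▸ Set.mem_univ x
    exact ⟨_, ⟨l, hl, rfl⟩, (mul_mul_singleton_mul_mul_normal hB hBne A C l hv).symm⟩

theorem double_coset_levi_equiv_general [U.Normal] (hLU : L.IsComplement' U)
    (hA : A ⊆ L) (hB : B ⊆ U) (hBne : B.Nonempty) (hC : C ⊆ L) {R : Set G} (hR : R = A * B) :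
    ∃ e : {d : Set G | ∃ l ∈ L, d = A * {l} * C} ≃
          {d : Set G | ∃ x : G, d = R * {x} * (C * (U : Set G))},
      ∀ l (hl : l ∈ L), (e ⟨A * {l} * C, ⟨l, hl, rfl⟩⟩ : Set G) = R * {l} * (C * (U : Set G)) := by
  subst hR
  exact ⟨(bijOn_mul_normal_of_isComplement' hLU hA hB hBne hC).equiv,
    fun l _ ↦ (mul_mul_singleton_mul_normal hB hBne A C l).symm⟩

end

/-- Let `G` be the internal semidirect product of a subgroup `L` and
a normal subgroup `U`.  Let `R ≤ G` satisfy `R = (R ∩ L)(R ∩ U)` and let `L₃` be a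
subgroup of `L`.  Then the map sending the double coset `(R ∩ L) l L₃` to `R l (L₃U)`
(for `l ∈ L`) is a well-defined bijection from `(R ∩ L)\L/L₃` onto `R\G/(L₃U)`. -/
theorem double_coset_levi_equiv {G : Type*} [Group G]
    (L U R L₃ : Subgroup G)
    (hN : U.Normal) (hInt : L ⊓ U = ⊥)
    (hGen : (↑L : Set G) * (↑U : Set G) = Set.univ)
    (hR : (↑R : Set G) = (↑(R ⊓ L) : Set G) * (↑(R ⊓ U) : Set G))
    (h₃ : L₃ ≤ L) :
    ∃ e : {d : Set G | ∃ l ∈ L, d = (↑(R ⊓ L) : Set G) * {l} * ↑L₃} ≃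
          {d : Set G | ∃ x : G, d = (↑R : Set G) * {x} * ((↑L₃ : Set G) * (↑U : Set G))},
      ∀ l (hl : l ∈ L),
        (e ⟨(↑(R ⊓ L) : Set G) * {l} * ↑L₃, ⟨l, hl, rfl⟩⟩ : Set G)
          = (↑R : Set G) * {l} * ((↑L₃ : Set G) * (↑U : Set G)) := by
  have hLU := Subgroup.isComplement'_of_disjoint_and_mul_eq_univ (disjoint_iff.2 hInt) hGen
  exact double_coset_levi_equiv_general hLU inf_le_right inf_le_right ⟨1, one_mem (R ⊓ U)⟩ h₃ hR
end

section
/- Let G be a group, K and P subgroups of G, and P' a subgroup of G that is the internal semidirect product of a subgroup L' and a normal subgroup U' of P'. Set L'_K = L' ∩ K, U'_K = U' ∩ K, and Q = P' ∩ K. Assume: (i) Q = L'_K U'_K; (ii) for every g ∈ G, g⁻¹Pg ∩ P' = (g⁻¹Pg ∩ L')(g⁻¹Pg ∩ U'); (iii) the double coset space P\G/P' is finite; and (iv) for every w ∈ G, the double coset space ((w⁻¹Pw) ∩ L')\L'/L'_K is finite. Then the set of K-orbits on (G/P) × (K/Q) under the diagonal K-action is finite if and only if for every g ∈ P W L' (equivalently,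 for every g of the form wv with w a representative of a double coset in P\G/P' and v ∈ L' a representative of a double coset in ((w⁻¹Pw) ∩ L')\L'/L'_K), the conjugation action of g⁻¹Pg ∩ L'_K on the double coset space (g⁻¹Pg ∩ U')\U'/U'_K has only finitely many orbits. -/
open Pointwise

/-- The double coset space `((g⁻¹Pg) ∩ U')\U'/U'_K`, realized as the set of subsets of
`G` of the form `((g⁻¹Pg) ∩ U') u U'_K` with `u ∈ U'`.  Here `g⁻¹Pg = {x | gxg⁻¹ ∈ P}`. -/
def unipotentDoubleCosets {G : Type*} [Group G] (P U' UK : Subgroup G) (g : G) :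
    Set (Set G) :=
  {d | ∃ u ∈ U', d = ({x : G | g * x * g⁻¹ ∈ P} ∩ (↑U' : Set G)) * {u} * ↑UK}

/-- The conjugation relation on `((g⁻¹Pg) ∩ U')\U'/U'_K` induced by the subgroup
`(g⁻¹Pg) ∩ L'_K`: two double cosets are related iff one is obtained from the other by
conjugation by an element `m ∈ (g⁻¹Pg) ∩ L'_K`.  The quotient `Quot` of this relation
is the set of orbits of the conjugation action of `(g⁻¹Pg) ∩ L'_K`. -/
def conjDosetRel {G : Type*} [Group G] (P U' UK LK : Subgroup G) (g : G) :
    ↥(unipotentDoubleCosets P U' UK g) → ↥(unipotentDoubleCosets P U' UK g) → Prop :=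
  fun d d' => ∃ m ∈ ({x : G | g * x * g⁻¹ ∈ P} ∩ (↑LK : Set G)),
    (d' : Set G) = (fun x => m * x * m⁻¹) '' (d : Set G)

/-!
The set of `K`-orbits on `(G/P) × (K/Q)` is `P\G/Q`, and with `R = L'_K U'` the inclusions
`Q ≤ R ≤ P'` give surjections `P\G/Q → P\G/R → P\G/P'`. A set is finite exactly when the base and
all fibres of a surjection out of it are finite. As `P'/R = L'/L'_K`, the fibre of
`P\G/R → P\G/P'` over `w` is `(w⁻¹Pw ∩ L')\L'/L'_K`; as `R/Q = U'/U'_K`, the fibre of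
`P\G/Q → P\G/R` over `g` is the set of `(g⁻¹Pg ∩ L'_K)`-orbits on `(g⁻¹Pg ∩ U')\U'/U'_K`. Both
identifications use that `g⁻¹Pg ∩ P'` is the product of its intersections with `L'` and `U'`.
-/

theorem finite_range_iff_of_eq_iff {α β γ : Type*} {f : α → β} {g : α → γ}
    (h : ∀ a b, f a = f b ↔ g a = g b) : (Set.range f).Finite ↔ (Set.range g).Finite := by
  have hker : Setoid.ker f = Setoid.ker g := Setoid.ext h
  rw [← Set.finite_coe_iff, ← Set.finite_coe_iff,
    ← (Setoid.quotientKerEquivRange f).finite_iff, hker,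
    (Setoid.quotientKerEquivRange g).finite_iff]

theorem finite_iff_finite_range_of_surjective {α β : Type*} {f : α → β}
    (hf : Function.Surjective f) : Finite β ↔ (Set.range f).Finite := by
  rw [hf.range_eq, Set.finite_univ_iff]

section DoubleCosets

variable {G : Type*} [Group G]

theorem doubleCoset_eq_iff {H K : Subgroup G} {a b : G} :
    DoubleCoset.doubleCoset a (H : Set G) K = DoubleCoset.doubleCoset b H K ↔
      ∃ h ∈ H, ∃ k ∈ K, b = h * a * k :=
  DoubleCoset.rel_iff

theorem mk_eq_mk_iff_doubleCoset_eq {H K : Subgroup G} {a b : G} :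
    DoubleCoset.mk H K a = DoubleCoset.mk H K b ↔
      DoubleCoset.doubleCoset a (H : Set G) K = DoubleCoset.doubleCoset b H K :=
  (DoubleCoset.eq H K a b).trans doubleCoset_eq_iff.symm

theorem finite_setOf_doubleCosets_iff (H K : Subgroup G) :
    {d : Set G | ∃ x : G, d = (H : Set G) * {x} * (K : Set G)}.Finite ↔
      Finite (DoubleCoset.Quotient (H : Set G) K) := by
  simp only [eq_comm (b := _ * _)]
  rw [finite_iff_finite_range_of_surjective
    (show Function.Surjective (DoubleCoset.mk H K) from Quotient.mk''_surjective)]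
  exact finite_range_iff_of_eq_iff fun _ _ => mk_eq_mk_iff_doubleCoset_eq.symm

theorem image_conj_doubleCoset {H K : Subgroup G} {m : G}
    (hH : m ∈ Subgroup.normalizer (H : Set G)) (hK : m ∈ Subgroup.normalizer (K : Set G)) (a : G) :
    (fun x => m * x * m⁻¹) '' DoubleCoset.doubleCoset a (H : Set G) K =
      DoubleCoset.doubleCoset (m * a * m⁻¹) H K := by
  change MulAut.conj m '' ((H : Set G) * {a} * K) = H * {MulAut.conj m a} * K
  rw [Set.image_mul, Set.image_mul, Set.image_singleton,
    Subgroup.mem_normalizer_iff_conj_image_eq.mp hH,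
    Subgroup.mem_normalizer_iff_conj_image_eq.mp hK]

/-- The conjugate `g⁻¹Pg`, encoded as a preimage so that its carrier is definitionally the set
`{x | gxg⁻¹ ∈ P}`. -/
abbrev invConj (P : Subgroup G) (g : G) : Subgroup G :=
  P.comap (MulAut.conj g).toMonoidHom

theorem mk_mul_left_eq_iff {P Q : Subgroup G} {g x y : G} :
    DoubleCoset.mk P Q (g * x) = DoubleCoset.mk P Q (g * y) ↔
      ∃ h ∈ invConj P g, ∃ q ∈ Q, y = h * x * q := by
  rw [DoubleCoset.eq]
  constructor
  · rintro ⟨p, hp, q, hq, h⟩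
    refine ⟨g⁻¹ * p * g, ?_, q, hq, ?_⟩
    · simpa [mul_assoc] using hp
    · rw [← inv_mul_cancel_left g y, h]
      group
  · rintro ⟨h, hh, q, hq, rfl⟩
    exact ⟨g * h * g⁻¹, hh, q, hq, by group⟩

theorem orbitRel_mk_eq_iff {K P Q : Subgroup G} (hQK : Q ≤ K) {a b : G} {k l : K} :
    (Quotient.mk (MulAction.orbitRel K ((G ⧸ P) × (K ⧸ Q.subgroupOf K))) (↑a, ↑k) =
        Quotient.mk (MulAction.orbitRel K ((G ⧸ P) × (K ⧸ Q.subgroupOf K))) (↑b, ↑l)) ↔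
      DoubleCoset.mk P Q (a⁻¹ * k) = DoubleCoset.mk P Q (b⁻¹ * l) := by
  have smul_eq_iff (c : K) :
      c • ((b : G ⧸ P), (l : K ⧸ Q.subgroupOf K)) = (↑a, ↑k) ↔
        ((c : G) * b)⁻¹ * a ∈ P ∧ ((c : G) * l)⁻¹ * k ∈ Q :=
    Prod.ext_iff.trans (and_congr QuotientGroup.eq QuotientGroup.eq)
  rw [Quotient.eq, MulAction.orbitRel_apply, MulAction.mem_orbit_iff, DoubleCoset.eq]
  simp only [smul_eq_iff]
  constructor
  · rintro ⟨c, hP, hQ⟩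
    exact ⟨_, hP, _, Q.inv_mem hQ, by group⟩
  · rintro ⟨p, hp, q, hq, h⟩
    have hp' : p = b⁻¹ * l * q⁻¹ * (k : G)⁻¹ * a := by rw [h]; group
    refine ⟨k * ⟨q, hQK hq⟩ * l⁻¹, ?_, ?_⟩
    · convert hp using 1
      rw [hp']
      push_cast
      group
    · convert Q.inv_mem hq using 1
      push_cast
      group

theorem finite_orbits_iff_finite_doubleCosets {K P Q : Subgroup G} (hQK : Q ≤ K) :
    Finite (Quotient (MulAction.orbitRel K ((G ⧸ P) × (K ⧸ Q.subgroupOf K)))) ↔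
      Finite (DoubleCoset.Quotient (P : Set G) Q) := by
  let orbit (x : G × K) : Quotient (MulAction.orbitRel K ((G ⧸ P) × (K ⧸ Q.subgroupOf K))) :=
    Quotient.mk _ (↑x.1, ↑x.2)
  let coset (x : G × K) : DoubleCoset.Quotient (P : Set G) Q := DoubleCoset.mk P Q (x.1⁻¹ * x.2)
  have orbit_surjective : orbit.Surjective :=
    Quotient.mk_surjective.comp
      (QuotientGroup.mk_surjective.prodMap QuotientGroup.mk_surjective)
  have coset_surjective : coset.Surjective := fun d =>
    Quotient.inductionOn' d fun g => ⟨(g⁻¹, 1), by simp [coset]⟩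
  rw [finite_iff_finite_range_of_surjective orbit_surjective,
    finite_iff_finite_range_of_surjective coset_surjective]
  exact finite_range_iff_of_eq_iff fun _ _ => orbitRel_mk_eq_iff hQK

theorem finite_doubleCosets_iff_finite_base_and_fibers {P Q R : Subgroup G} {T S : Set G}
    (hRTQ : (R : Set G) ⊆ T * Q) (hQR : Q ≤ R)
    (hS : ∀ x, ∃ s ∈ S, DoubleCoset.mk P R s = DoubleCoset.mk P R x) :
    Finite (DoubleCoset.Quotient (P : Set G) Q) ↔
      Finite (DoubleCoset.Quotient (P : Set G) R) ∧
        ∀ s ∈ S, (Set.range fun t : T => DoubleCoset.mk P Q (s * t)).Finite := by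
  let π : DoubleCoset.Quotient (P : Set G) Q → DoubleCoset.Quotient (P : Set G) R :=
    Quotient.map' id fun a b hab => by
      obtain ⟨p, hp, q, hq, rfl⟩ := DoubleCoset.rel_iff.mp hab
      exact DoubleCoset.rel_iff.mpr ⟨p, hp, q, hQR hq, rfl⟩
  constructor
  · intro hfin
    have hπ : π.Surjective := fun d => Quotient.inductionOn' d fun g => ⟨DoubleCoset.mk P Q g, rfl⟩
    exact ⟨Finite.of_surjective π hπ, fun _ _ => Set.toFinite _⟩
  · rintro ⟨hbase, hfibers⟩
    rw [← Set.finite_univ_iff]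
    refine Set.Finite.of_finite_fibers π (Set.toFinite _) fun d _ => ?_
    induction d using Quotient.inductionOn' with | h x =>
    obtain ⟨s, hs, hsx⟩ := hS x
    refine (hfibers s hs).subset ?_
    rintro d ⟨-, hd⟩
    induction d using Quotient.inductionOn' with | h y =>
    obtain ⟨p, hp, r, hr, rfl⟩ := (DoubleCoset.eq P R s y).mp (hsx.trans (Eq.symm hd))
    obtain ⟨t, ht, q, hq, rfl⟩ := hRTQ hr
    exact ⟨⟨t, ht⟩, (DoubleCoset.eq P Q _ _).mpr ⟨p, hp, q, hq, by simp only [mul_assoc]⟩⟩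

end DoubleCosets

section ConjugationOrbits

variable {G : Type*} [Group G] {P U A B : Subgroup G} {g : G}

/-- The point `(g⁻¹Pg ∩ U) u B` of the space `unipotentDoubleCosets`, for `u ∈ U`. -/
def unipotentDoubleCoset (P U B : Subgroup G) (g : G) (u : U) : unipotentDoubleCosets P U B g :=
  ⟨DoubleCoset.doubleCoset (u : G) (invConj P g ⊓ U : Subgroup G) B, u, u.2, rfl⟩

theorem unipotentDoubleCoset_surjective (P U B : Subgroup G) (g : G) :
    Function.Surjective (unipotentDoubleCoset P U B g) := by
  rintro ⟨_, u, hu, rfl⟩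
  exact ⟨⟨u, hu⟩, rfl⟩

theorem conjDosetRel_equivalence (P U B A : Subgroup G) (g : G) :
    Equivalence (conjDosetRel P U B A g) where
  refl d := ⟨1, (invConj P g ⊓ A).one_mem, by simp⟩
  symm := by
    rintro d d' ⟨m, hm, h⟩
    exact ⟨m⁻¹, (invConj P g ⊓ A).inv_mem hm, by simp [h, Set.image_image, mul_assoc]⟩
  trans := by
    rintro d d' d'' ⟨m, hm, h⟩ ⟨n, hn, h'⟩
    exact ⟨n * m, (invConj P g ⊓ A).mul_mem hn hm, by simp [h, h', Set.image_image, mul_assoc]⟩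

theorem conjDosetRel_unipotentDoubleCoset_iff (hAU : A ≤ Subgroup.normalizer (U : Set G))
    (hAB : A ≤ Subgroup.normalizer (B : Set G)) {u v : U} :
    conjDosetRel P U B A g (unipotentDoubleCoset P U B g u) (unipotentDoubleCoset P U B g v) ↔
      ∃ m ∈ invConj P g ⊓ A, ∃ c ∈ invConj P g ⊓ U, ∃ b ∈ B, (v : G) = c * (m * u * m⁻¹) * b := by
  refine exists_congr fun m => and_congr_right fun hm => ?_
  have hmU : m ∈ Subgroup.normalizer ((invConj P g ⊓ U : Subgroup G) : Set G) :=
    Subgroup.inf_normalizer_le_normalizer_inf ⟨Subgroup.le_normalizer hm.1, hAU hm.2⟩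
  change DoubleCoset.doubleCoset (v : G) ((invConj P g ⊓ U : Subgroup G) : Set G) B =
    (fun x => m * x * m⁻¹) '' DoubleCoset.doubleCoset (u : G) (invConj P g ⊓ U : Subgroup G) B ↔ _
  rw [image_conj_doubleCoset hmU (hAB hm.2), eq_comm, doubleCoset_eq_iff]

end ConjugationOrbits

section Fibers

variable {G : Type*} [Group G] {P L U A B : Subgroup G} {g : G}

theorem left_mem_of_mul_mem {H : Subgroup G} (hdisj : Disjoint L U)
    (hH : (H : Set G) ∩ (L * U) ⊆ ((H : Set G) ∩ L) * ((H : Set G) ∩ U)) {l u : G} (hl : l ∈ L)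
    (hu : u ∈ U) (hlu : l * u ∈ H) : l ∈ H := by
  obtain ⟨a, ⟨haH, haL⟩, c, ⟨-, hcU⟩, hac⟩ :=
    hH ⟨hlu, Set.mul_mem_mul hl hu⟩
  have hpair : ((⟨a, haL⟩, ⟨c, hcU⟩) : L × U) = (⟨l, hl⟩, ⟨u, hu⟩) :=
    Subgroup.mul_injective_of_disjoint hdisj hac
  have hal : a = l := congrArg (fun x : L × U => (x.1 : G)) hpair
  exact hal ▸ haH

theorem mk_mul_levi_eq_iff (hLU : L ≤ Subgroup.normalizer (U : Set G)) (hAL : A ≤ L)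
    (hP : ∀ l ∈ L, ∀ u ∈ U, l * u ∈ invConj P g → l ∈ invConj P g) {l l' : L} :
    DoubleCoset.mk P (A ⊔ U) (g * l) = DoubleCoset.mk P (A ⊔ U) (g * l') ↔
      DoubleCoset.mk (invConj P g ⊓ L) A (l : G) = DoubleCoset.mk (invConj P g ⊓ L) A (l' : G) := by
  rw [mk_mul_left_eq_iff, DoubleCoset.eq]
  constructor
  · rintro ⟨h, hh, r, hr, hl'⟩
    rw [← SetLike.mem_coe,
      Subgroup.coe_mul_of_left_le_normalizer_right A U (hAL.trans hLU)] at hr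
    obtain ⟨a, ha, u, hu, rfl⟩ := hr
    have hla : (l : G) * a ∈ L := L.mul_mem l.2 (hAL ha)
    have hlevi : l' * (l * a : G)⁻¹ ∈ L := L.mul_mem l'.2 (L.inv_mem hla)
    have hunip : l * a * u⁻¹ * (l * a : G)⁻¹ ∈ U :=
      (Subgroup.mem_normalizer_iff.mp (hLU hla) _).mp (U.inv_mem hu)
    have hfactor : h = (l' * (l * a : G)⁻¹) * (l * a * u⁻¹ * (l * a : G)⁻¹) := by
      rw [hl']
      group
    exact ⟨_, ⟨hP _ hlevi _ hunip (hfactor ▸ hh), hlevi⟩, a, ha, by group⟩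
  · rintro ⟨h, hh, a, ha, hl'⟩
    exact ⟨h, hh.1, a, Subgroup.mem_sup_left ha, hl'⟩

theorem mk_mul_unipotent_eq_iff (hAU : A ≤ Subgroup.normalizer (U : Set G)) (hBU : B ≤ U)
    (hAB : A ≤ Subgroup.normalizer (B : Set G))
    (hP : ∀ a ∈ A, ∀ u ∈ U, a * u ∈ invConj P g → a ∈ invConj P g) {u v : U} :
    DoubleCoset.mk P (A ⊔ B) (g * u) = DoubleCoset.mk P (A ⊔ B) (g * v) ↔
      ∃ m ∈ invConj P g ⊓ A, ∃ c ∈ invConj P g ⊓ U, ∃ b ∈ B, (v : G) = c * (m * u * m⁻¹) * b := by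
  rw [mk_mul_left_eq_iff]
  constructor
  · rintro ⟨h, hh, q, hq, hv⟩
    rw [← SetLike.mem_coe, Subgroup.coe_mul_of_left_le_normalizer_right A B hAB] at hq
    obtain ⟨a, ha, b, hb, rfl⟩ := hq
    have hvb : (v : G) * b⁻¹ ∈ U := U.mul_mem v.2 (U.inv_mem (hBU hb))
    have hunip : a * (v * b⁻¹) * a⁻¹ * (u : G)⁻¹ ∈ U :=
      U.mul_mem ((Subgroup.mem_normalizer_iff.mp (hAU ha) _).mp hvb) (U.inv_mem u.2)
    have hfactor : h = a⁻¹ * (a * (v * b⁻¹) * a⁻¹ * (u : G)⁻¹) := by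
      rw [hv]
      group
    have ha' : a⁻¹ ∈ invConj P g := hP _ (A.inv_mem ha) _ hunip (hfactor ▸ hh)
    have hcU : v * b⁻¹ * (a⁻¹ * (u : G) * a)⁻¹ ∈ U :=
      U.mul_mem hvb (U.inv_mem ((Subgroup.mem_normalizer_iff''.mp (hAU ha) _).mp u.2))
    have hcP : v * b⁻¹ * (a⁻¹ * (u : G) * a)⁻¹ ∈ invConj P g := by
      have hc : v * b⁻¹ * (a⁻¹ * (u : G) * a)⁻¹ = h * (a⁻¹)⁻¹ := by
        rw [hv]
        group
      exact hc ▸ (invConj P g).mul_mem hh ((invConj P g).inv_mem ha')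
    exact ⟨a⁻¹, ⟨ha', A.inv_mem ha⟩, _, ⟨hcP, hcU⟩, b, hb, by group⟩
  · rintro ⟨m, hm, c, hc, b, hb, hv⟩
    refine ⟨c * m, (invConj P g).mul_mem hc.1 hm.1, m⁻¹ * b,
      Subgroup.mul_mem_sup (A.inv_mem hm.2) hb, ?_⟩
    rw [hv]
    group

theorem finite_levi_fiber_iff (hLU : L ≤ Subgroup.normalizer (U : Set G)) (hAL : A ≤ L)
    (hP : ∀ l ∈ L, ∀ u ∈ U, l * u ∈ invConj P g → l ∈ invConj P g) :
    (Set.range fun l : L => DoubleCoset.mk P (A ⊔ U) (g * l)).Finite ↔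
      (Set.range fun l : L =>
        DoubleCoset.doubleCoset (l : G) ((invConj P g ⊓ L : Subgroup G) : Set G) A).Finite :=
  finite_range_iff_of_eq_iff fun _ _ =>
    (mk_mul_levi_eq_iff hLU hAL hP).trans mk_eq_mk_iff_doubleCoset_eq

theorem finite_unipotent_fiber_iff (hAU : A ≤ Subgroup.normalizer (U : Set G)) (hBU : B ≤ U)
    (hAB : A ≤ Subgroup.normalizer (B : Set G))
    (hP : ∀ a ∈ A, ∀ u ∈ U, a * u ∈ invConj P g → a ∈ invConj P g) :
    (Set.range fun u : U => DoubleCoset.mk P (A ⊔ B) (g * u)).Finite ↔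
      Finite (Quot (conjDosetRel P U B A g)) := by
  rw [finite_iff_finite_range_of_surjective
    (Quot.mk_surjective.comp (unipotentDoubleCoset_surjective P U B g))]
  refine finite_range_iff_of_eq_iff fun u v => ?_
  rw [mk_mul_unipotent_eq_iff hAU hBU hAB hP, Function.comp_apply, Function.comp_apply,
    (conjDosetRel_equivalence P U B A g).quot_mk_eq_iff,
    conjDosetRel_unipotentDoubleCoset_iff hAU hAB]

end Fibers

theorem finite_doubleCosets_iff_of_semidirect {G : Type*} [Group G] {P L U A B : Subgroup G}
    {W : Set G} (hLU : L ≤ Subgroup.normalizer (U : Set G)) (hAL : A ≤ L) (hBU : B ≤ U)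
    (hAB : A ≤ Subgroup.normalizer (B : Set G))
    (hP : ∀ g, ∀ l ∈ L, ∀ u ∈ U, l * u ∈ invConj P g → l ∈ invConj P g)
    (hW : ∀ x, ∃ w ∈ W, DoubleCoset.mk P (L ⊔ U) w = DoubleCoset.mk P (L ⊔ U) x) :
    Finite (DoubleCoset.Quotient (P : Set G) (A ⊔ B : Subgroup G)) ↔
      Finite (DoubleCoset.Quotient (P : Set G) (L ⊔ U : Subgroup G)) ∧
        (∀ w ∈ W, (Set.range fun l : L =>
          DoubleCoset.doubleCoset (l : G) ((invConj P w ⊓ L : Subgroup G) : Set G) A).Finite) ∧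
        ∀ g ∈ (P : Set G) * W * (L : Set G), Finite (Quot (conjDosetRel P U B A g)) := by
  have hAU := hAL.trans hLU
  have sup_eq_mul : ((L ⊔ U : Subgroup G) : Set G) = L * U :=
    Subgroup.coe_mul_of_left_le_normalizer_right L U hLU
  have sup_subset_levi_mul : ((L ⊔ U : Subgroup G) : Set G) ⊆ L * (A ⊔ U : Subgroup G) :=
    sup_eq_mul.trans_subset (Set.mul_subset_mul_left (SetLike.coe_subset_coe.mpr le_sup_right))
  have sup_subset_unipotent_mul : ((A ⊔ U : Subgroup G) : Set G) ⊆ U * (A ⊔ B : Subgroup G) := by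
    rw [sup_comm A U, Subgroup.coe_mul_of_right_le_normalizer_left U A hAU]
    exact Set.mul_subset_mul_left (SetLike.coe_subset_coe.mpr le_sup_left)
  have hPWL (x : G) : ∃ s ∈ (P : Set G) * W * (L : Set G),
      DoubleCoset.mk P (A ⊔ U) s = DoubleCoset.mk P (A ⊔ U) x := by
    obtain ⟨w, hw, hwx⟩ := hW x
    obtain ⟨p, hp, r, hr, rfl⟩ := (DoubleCoset.eq P (L ⊔ U) w x).mp hwx
    obtain ⟨l, hl, u, hu, rfl⟩ := sup_eq_mul.subset hr
    refine ⟨p * w * l, Set.mul_mem_mul (Set.mul_mem_mul hp hw) hl, ?_⟩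
    exact (DoubleCoset.eq _ _ _ _).mpr
      ⟨1, P.one_mem, u, Subgroup.mem_sup_right hu, by simp only [one_mul, mul_assoc]⟩
  rw [finite_doubleCosets_iff_finite_base_and_fibers sup_subset_unipotent_mul
      (sup_le_sup_left hBU A) hPWL,
    finite_doubleCosets_iff_finite_base_and_fibers sup_subset_levi_mul
      (sup_le_sup_right hAL U) hW, and_assoc]
  refine and_congr_right' (and_congr (forall₂_congr fun w _ => ?_) (forall₂_congr fun g _ => ?_))
  · exact finite_levi_fiber_iff hLU hAL (hP w)
  · exact finite_unipotent_fiber_iff hAU hBU hAB fun a ha => hP g a (hAL ha)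

theorem double_flag_finite_type_iff_general {G : Type*} [Group G]
    (K P P' L' U' : Subgroup G)
    (hNormal : ∀ p ∈ P', ∀ u ∈ U', p * u * p⁻¹ ∈ U')
    (hInt : L' ⊓ U' = ⊥)
    (hGen : (↑L' : Set G) * (↑U' : Set G) = (↑P' : Set G))
    (hQ : (↑(P' ⊓ K) : Set G) = (↑(L' ⊓ K) : Set G) * (↑(U' ⊓ K) : Set G))
    (hLevi : ∀ g : G,
      ({x : G | g * x * g⁻¹ ∈ P} ∩ (↑P' : Set G))
        = ({x : G | g * x * g⁻¹ ∈ P} ∩ (↑L' : Set G)) *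
          ({x : G | g * x * g⁻¹ ∈ P} ∩ (↑U' : Set G)))
    (W : Set G)
    (hW : ∀ x : G, ∃ w ∈ W, x ∈ (↑P : Set G) * {w} * (↑P' : Set G)) :
    Finite (Quotient (MulAction.orbitRel ↥K ((G ⧸ P) × (↥K ⧸ (P' ⊓ K).subgroupOf K))))
      ↔ {d : Set G | ∃ x : G, d = (↑P : Set G) * {x} * (↑P' : Set G)}.Finite ∧
        (∀ w ∈ W, {d : Set G | ∃ l ∈ L',
          d = ({x : G | w * x * w⁻¹ ∈ P} ∩ (↑L' : Set G)) * {l} * ↑(L' ⊓ K)}.Finite) ∧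
        ∀ g ∈ (↑P : Set G) * W * (↑L' : Set G),
          Finite (Quot (conjDosetRel P U' (U' ⊓ K) (L' ⊓ K) g)) := by
  have hLU : L' ≤ Subgroup.normalizer (U' : Set G) := Subgroup.le_normalizer_iff.mpr fun l hl =>
    hNormal l (hGen.subset ⟨l, hl, 1, U'.one_mem, mul_one l⟩)
  have hAB : L' ⊓ K ≤ Subgroup.normalizer ((U' ⊓ K : Subgroup G) : Set G) :=
    (inf_le_inf hLU Subgroup.le_normalizer).trans Subgroup.inf_normalizer_le_normalizer_inf
  have hP' : P' = L' ⊔ U' := SetLike.coe_injective <|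
    hGen.symm.trans (Subgroup.coe_mul_of_left_le_normalizer_right L' U' hLU).symm
  have hQ' : P' ⊓ K = (L' ⊓ K) ⊔ (U' ⊓ K) := SetLike.coe_injective <|
    hQ.trans (Subgroup.coe_mul_of_left_le_normalizer_right _ _ hAB).symm
  have hP (g : G) (l : G) (hl : l ∈ L') (u : G) (hu : u ∈ U') (hlu : l * u ∈ invConj P g) :
      l ∈ invConj P g :=
    left_mem_of_mul_mem (disjoint_iff.mpr hInt) (hGen ▸ (hLevi g).subset) hl hu hlu
  have hW' (x : G) : ∃ w ∈ W, DoubleCoset.mk P (L' ⊔ U') w = DoubleCoset.mk P (L' ⊔ U') x := by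
    obtain ⟨w, hw, hx⟩ := hW x
    exact ⟨w, hw, hP' ▸ (DoubleCoset.eq P P' w x).mpr (DoubleCoset.mem_doubleCoset.mp hx)⟩
  have hlevi (w : G) : {d : Set G | ∃ l ∈ L',
      d = ({x : G | w * x * w⁻¹ ∈ P} ∩ (↑L' : Set G)) * {l} * ↑(L' ⊓ K)} =
      Set.range fun l : L' => DoubleCoset.doubleCoset (l : G)
        ((invConj P w ⊓ L' : Subgroup G) : Set G) (L' ⊓ K : Subgroup G) := by
    ext d
    exact ⟨fun ⟨l, hl, hd⟩ => ⟨⟨l, hl⟩, hd.symm⟩, fun ⟨l, hd⟩ => ⟨l, l.2, hd.symm⟩⟩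
  simp only [hlevi]
  rw [finite_orbits_iff_finite_doubleCosets inf_le_right, finite_setOf_doubleCosets_iff, hQ', hP']
  exact finite_doubleCosets_iff_of_semidirect hLU inf_le_left inf_le_left hAB hP hW'

/-- Finiteness criterion for double flag varieties: under the setup of
the orbit parametrization (with `P' = L' ⋉ U'`, `Q = P' ∩ K = L'_K U'_K`,
`g⁻¹Pg ∩ P' = (g⁻¹Pg ∩ L')(g⁻¹Pg ∩ U')`, `P\G/P'` finite, each
`((w⁻¹Pw) ∩ L')\L'/L'_K` finite, and `W` a system of representatives for `P\G/P'`),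
the set of `K`-orbits on `(G/P) × (K/Q)` is finite if and only if for every
`g ∈ P W L'` the conjugation action of `g⁻¹Pg ∩ L'_K` on the double coset space
`(g⁻¹Pg ∩ U')\U'/U'_K` has only finitely many orbits. -/
theorem double_flag_finite_type_iff {G : Type*} [Group G]
    (K P P' L' U' : Subgroup G)
    (hL' : L' ≤ P') (hU' : U' ≤ P')
    (hNormal : ∀ p ∈ P', ∀ u ∈ U', p * u * p⁻¹ ∈ U')
    (hInt : L' ⊓ U' = ⊥)
    (hGen : (↑L' : Set G) * (↑U' : Set G) = (↑P' : Set G))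
    (hQ : (↑(P' ⊓ K) : Set G) = (↑(L' ⊓ K) : Set G) * (↑(U' ⊓ K) : Set G))
    (hLevi : ∀ g : G,
      ({x : G | g * x * g⁻¹ ∈ P} ∩ (↑P' : Set G))
        = ({x : G | g * x * g⁻¹ ∈ P} ∩ (↑L' : Set G)) *
          ({x : G | g * x * g⁻¹ ∈ P} ∩ (↑U' : Set G)))
    (hFin₁ : {d : Set G | ∃ x : G, d = (↑P : Set G) * {x} * (↑P' : Set G)}.Finite)
    (hFin₂ : ∀ w : G,
      {d : Set G | ∃ l ∈ L',
        d = ({x : G | w * x * w⁻¹ ∈ P} ∩ (↑L' : Set G)) * {l} * ↑(L' ⊓ K)}.Finite)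
    (W : Set G)
    (hW₁ : ∀ x : G, ∃ w ∈ W, x ∈ (↑P : Set G) * {w} * (↑P' : Set G))
    (hW₂ : ∀ w ∈ W, ∀ w' ∈ W, w' ∈ (↑P : Set G) * {w} * (↑P' : Set G) → w = w') :
    Finite (Quotient (MulAction.orbitRel ↥K ((G ⧸ P) × (↥K ⧸ (P' ⊓ K).subgroupOf K))))
      ↔ ∀ g ∈ (↑P : Set G) * W * (↑L' : Set G),
          Finite (Quot (conjDosetRel P U' (U' ⊓ K) (L' ⊓ K) g)) := by
  rw [double_flag_finite_type_iff_general K P P' L' U' hNormal hInt hGen hQ hLevi W hW₁,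
    and_iff_right hFin₁, and_iff_right fun w _ => hFin₂ w]
end
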